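/- Define ψ* = inf over z ∈ ℝ of ((1 - e^z + z·e^z)(e^z + 1))/(e^z - 1)² (with the function extended by its limit value 2 at z = 0). Then ψ* > 0; in particular ψ* ≥ 8/9 is false to prove exactly, but one can show ψ* ≥ 0.89 and ψ* ≤ 0.9. -/

import Mathlib

noncomputable def psiStar : ℝ :=
  sInf ((fun z : ℝ =>
    ((1 - Real.exp z + z * Real.exp z) * (Real.exp z + 1)) / (Real.exp z - 1) ^ 2) ''
    {z : ℝ | z ≠ 0})

/-- The gap in the bound `log u ≤ (u - 1) - (1 - b) * (u - 1) ^ 2 / (u + 1)`. -/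
noncomputable def logGap (b u : ℝ) : ℝ :=
  b * u + (2 - 3 * b) - (4 - 4 * b) / (u + 1) - Real.log u

lemma logGap_one (b : ℝ) : logGap b 1 = 0 := by
  simp only [logGap, Real.log_one]
  ring

lemma hasDerivAt_logGap (b : ℝ) {u : ℝ} (hu : 0 < u) :
    HasDerivAt (logGap b)
      ((u - 1) * (b * u ^ 2 - (1 - 3 * b) * u + 1) / (u * (u + 1) ^ 2)) u := by
  have hu1 : u + 1 ≠ 0 := by positivity
  have hdiv := (hasDerivAt_const u (4 - 4 * b)).div ((hasDerivAt_id u).add_const 1) hu1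
  have h := ((((hasDerivAt_id u).const_mul b).add_const (2 - 3 * b)).sub hdiv).sub
    (Real.hasDerivAt_log hu.ne')
  refine h.congr_deriv ?_
  simp only [id]
  field_simp
  ring

lemma continuousOn_logGap (b : ℝ) {s : Set ℝ} (hs : ∀ u ∈ s, 0 < u) :
    ContinuousOn (logGap b) s :=
  fun u hu => (hasDerivAt_logGap b (hs u hu)).continuousAt.continuousWithinAt

lemma logGap_antitoneOn : AntitoneOn (logGap 0.11) (Set.Ioc 0 1) := by
  refine antitoneOn_of_deriv_nonpos (convex_Ioc 0 1) (continuousOn_logGap _ fun u hu => hu.1)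
    (fun u hu => ?_) (fun u hu => ?_) <;> rw [interior_Ioc] at hu
  · exact (hasDerivAt_logGap _ hu.1).differentiableAt.differentiableWithinAt
  · obtain ⟨h0, h1⟩ := hu
    rw [(hasDerivAt_logGap _ h0).deriv]
    refine div_nonpos_of_nonpos_of_nonneg ?_ (by positivity)
    exact mul_nonpos_of_nonpos_of_nonneg (by linarith) (by nlinarith)

lemma logGap_monotoneOn : MonotoneOn (logGap 0.11) (Set.Icc 1 2) := by
  refine monotoneOn_of_deriv_nonneg (convex_Icc 1 2)
    (continuousOn_logGap _ fun u hu => by linarith [hu.1])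
    (fun u hu => ?_) (fun u hu => ?_) <;> rw [interior_Icc] at hu <;>
    obtain ⟨h1, h2⟩ := hu <;> have h0 : 0 < u := by linarith
  · exact (hasDerivAt_logGap _ h0).differentiableAt.differentiableWithinAt
  · rw [(hasDerivAt_logGap _ h0).deriv]
    refine div_nonneg ?_ (by positivity)
    exact mul_nonneg (by linarith) (by nlinarith)

lemma logGap_one_ninth_monotoneOn : MonotoneOn (logGap (1 / 9)) (Set.Ici 1) := by
  refine monotoneOn_of_deriv_nonneg (convex_Ici 1)
    (continuousOn_logGap _ fun u hu => by linarith [Set.mem_Ici.1 hu])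
    (fun u hu => ?_) (fun u hu => ?_) <;> rw [interior_Ici] at hu <;>
    have h1 : 1 < u := hu <;> have h0 : 0 < u := by linarith
  · exact (hasDerivAt_logGap _ h0).differentiableAt.differentiableWithinAt
  · rw [(hasDerivAt_logGap _ h0).deriv]
    refine div_nonneg ?_ (by positivity)
    exact mul_nonneg (by linarith) (by nlinarith [sq_nonneg (u - 3)])

lemma logGap_nonneg {u : ℝ} (hu : 0 < u) : 0 ≤ logGap 0.11 u := by
  have hlog2 := Real.log_two_lt_d9
  rcases le_total u 1 with h1 | h1
  · rw [← logGap_one 0.11]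
    exact logGap_antitoneOn ⟨hu, h1⟩ ⟨one_pos, le_rfl⟩ h1
  rcases le_total u 2 with h2 | h2
  · rw [← logGap_one 0.11]
    exact logGap_monotoneOn ⟨le_rfl, one_le_two⟩ ⟨h1, h2⟩ h1
  rcases le_total u 10 with h10 | h10
  · have hmono := logGap_one_ninth_monotoneOn (Set.mem_Ici.2 one_le_two) (Set.mem_Ici.2 h1) h2
    have hsub : logGap 0.11 u = logGap (1 / 9) u - (u - 1) ^ 2 / (900 * (u + 1)) := by
      simp only [logGap]
      field_simp
      ring
    have hsmall : (u - 1) ^ 2 / (900 * (u + 1)) ≤ 0.01 := by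
      rw [div_le_iff₀ (by positivity)]
      nlinarith
    have htwo : logGap (1 / 9) 2 = 19 / 27 - Real.log 2 := by
      simp only [logGap]
      ring
    rw [hsub]
    linarith
  · have htangent := Real.log_le_sub_one_of_pos (show 0 < u / 16 by positivity)
    have h16 : Real.log 16 = 4 * Real.log 2 := by
      rw [show (16 : ℝ) = 2 ^ 4 by norm_num, Real.log_pow]
      norm_num
    rw [Real.log_div hu.ne' (by norm_num), h16] at htangent
    have hfrac : (4 - 4 * 0.11) / (u + 1) ≤ 0.33 := by
      rw [div_le_iff₀ (by positivity)]
      linarith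
    simp only [logGap]
    linarith

lemma le_ratio {z : ℝ} (hz : z ≠ 0) :
    0.89 ≤ ((1 - Real.exp z + z * Real.exp z) * (Real.exp z + 1)) / (Real.exp z - 1) ^ 2 := by
  have hx : 0 < Real.exp z := Real.exp_pos z
  have hx1 : Real.exp z - 1 ≠ 0 := by
    rw [sub_ne_zero, Ne, Real.exp_eq_one_iff]
    exact hz
  have hgap := logGap_nonneg (inv_pos.2 hx)
  simp only [logGap, Real.log_inv, Real.log_exp] at hgap
  rw [le_div_iff₀ (by positivity), ← sub_nonneg]
  have hmul := mul_nonneg hgap (show 0 ≤ Real.exp z * (Real.exp z + 1) by positivity)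
  refine hmul.trans_eq ?_
  field_simp
  ring

theorem stmt_2 : 0 < psiStar ∧ 0.89 ≤ psiStar ∧ psiStar ≤ 0.9 := by
  have hlower : 0.89 ≤ psiStar := by
    refine le_csInf (Set.Nonempty.image _ ⟨1, one_ne_zero⟩) ?_
    rintro _ ⟨z, hz, rfl⟩
    exact le_ratio hz
  refine ⟨by linarith, hlower, ?_⟩
  have hlog2 := Real.log_two_gt_d9
  have hlog4 : Real.log 4 = 2 * Real.log 2 := by
    rw [show (4 : ℝ) = 2 ^ 2 by norm_num, Real.log_pow]
    norm_num
  have hne : -Real.log 4 ≠ 0 := by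
    rw [hlog4]
    linarith
  have hbdd : BddBelow ((fun z : ℝ =>
      ((1 - Real.exp z + z * Real.exp z) * (Real.exp z + 1)) / (Real.exp z - 1) ^ 2) ''
      {z : ℝ | z ≠ 0}) := by
    refine ⟨0.89, ?_⟩
    rintro _ ⟨z, hz, rfl⟩
    exact le_ratio hz
  refine (csInf_le hbdd (Set.mem_image_of_mem _ hne)).trans ?_
  simp only [Real.exp_neg, Real.exp_log (show (0 : ℝ) < 4 by norm_num)]
  rw [hlog4, div_le_iff₀ (by norm_num)]
  linarith
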